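/- Let $K$ be an algebraically closed field and let $\Gamma$ be a Brauer tree of multiplicity one, i.e. a finite tree with a fixed cyclic ordering of the edges incident to each vertex. The Brauer quiver $Q$ of $\Gamma$ has the edges of $\Gamma$ as vertices and, for each edge $i$ and each end point $x$ of $i$, one arrow from $i$ to the edge that follows $i$ in the cyclic order around $x$ (a loop if $x$ is a leaf). Thus $Q$ is a union of oriented cycles, one for each vertex of $\Gamma$ (of positive degree), and each vertex of $Q$ lies on exactly two of them. Let $A$ be the basic Brauer tree algebra of $\Gamma$, i.e. the path algebra $KQ$ (where $ab$ is the path $a$ followed by $b$) modulo the relations that $ab=0$ for composable arrows $a,b$ lying on different cycles, and that for each vertex of $Q$ the two full cycles starting at it are equal. Modules are finitely generated left modules, and $e_i$ is the idempotent of the vertex $i$. An $A$-cycle is a maximal ordered set of nonrepeating arrows of $Q$ such that the product in $A$ of any two neighboring arrows is nonzero; a vertex of $Q$ belongs to it if it is the source or the target of one of its arrows. A two-term partial tilting complex is a complex $T$ of finitely generated projective $A$-modules concentrated in degrees $0$ and $1$ with $\mathrm{Hom}_{D^b(A)}(T,T[k])=0$ for all $k\neq 0$. Suppose that such a complex $T=(P_0\xrightarrow{f}P_1)$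 is the minimal projective presentation of an indecomposable non-projective module, and write $P_0=\bigoplus_{i\in I}Ae_i$, $P_1=\bigoplus_{j\in J}Ae_j$. The diagram of $T$ consists of the vertices of $Q$ in $I\cup J$ and, for all $i\in I$ and $j\in J$ such that the component $Ae_i\to Ae_j$ of $f$ is nonzero, of the path from $i$ to $j$ along the cycle of $Q$ that contains both. Let $T_i$ and $T_j$ be indecomposable two-term partial tilting complexes over $A$, each of which is the minimal projective presentation of an indecomposable non-projective module. If no $A$-cycle contains both a vertex of the diagram of $T_i$ and a vertex of the diagram of $T_j$, then $\mathrm{Hom}_{D^b(A)}(T_i,T_j[-1])=0$. -/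

import Mathlib

open CategoryTheory

universe u v w

/-- A Brauer tree with multiplicity one: a tree together with a cyclic ordering of the edges
incident to each vertex. A dart `d` of the tree is an edge together with one of its end points
`d.fst`; the cyclic orderings are given by the permutation `next`, which sends the edge `d.edge`,
seen from the vertex `d.fst`, to the edge that follows it around that vertex. -/
structure BrauerTree (V : Type v) where
  graph : SimpleGraph V
  isTree : graph.IsTree
  next : Equiv.Perm graph.Dart
  next_fst : ∀ d, (next d).fst = d.fst
  sameCycle_of_fst_eq : ∀ d d' : graph.Dart, d.fst = d'.fst → next.SameCycle d d'

namespace BrauerTree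

variable {V : Type v} (Γ : BrauerTree V)

/-- The vertices of the Brauer quiver are the edges of the tree. -/
abbrev Edge : Type v := Γ.graph.edgeSet

/-- The arrows of the Brauer quiver: for each edge `i` and each end point `x` of it there is one
arrow from `i` to the edge that follows `i` around `x` (a loop if `x` is a leaf). -/
abbrev Arrow : Type v := Γ.graph.Dart

variable {Γ} in
/-- The source of an arrow of the quiver. -/
def source (a : Γ.Arrow) : Γ.Edge := ⟨a.edge, a.edge_mem⟩

/-- The target of an arrow of the quiver. -/
def target (a : Γ.Arrow) : Γ.Edge := source (Γ.next a)

/-- The generators of the path algebra of the quiver: its trivial paths and its arrows. -/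
inductive Gen : Type v
  | triv (i : Γ.Edge) : Gen
  | arr (a : Γ.Arrow) : Gen

variable (K : Type u) [Field K]

/-- The trivial path at `i`, in the free algebra. -/
def freeTriv (i : Γ.Edge) : FreeAlgebra K Γ.Gen := FreeAlgebra.ι K (Gen.triv i)

/-- The arrow `a`, in the free algebra. -/
def freeArr (a : Γ.Arrow) : FreeAlgebra K Γ.Gen := FreeAlgebra.ι K (Gen.arr a)

/-- The path that starts with the arrow `a` and goes once around the cycle of `a`. -/
noncomputable def freeCycle (a : Γ.Arrow) : FreeAlgebra K Γ.Gen :=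
  ((List.range (Function.minimalPeriod Γ.next a)).map fun k => Γ.freeArr K (Γ.next^[k] a)).prod

/-- The relations of the Brauer tree algebra. The first five are those of the path algebra of
the quiver, where the product `a * b` is the path `a` followed by `b`. The arrows that start at
the target of `a` are `next a`, which continues the cycle of `a`, and `(next a).symm`, which lies
on the other cycle through this vertex; the sixth relation thus says `αβ = 0 = βα`. The last one
says that the two full cycles that start at the same vertex are equal. -/
inductive Rel : FreeAlgebra K Γ.Gen → FreeAlgebra K Γ.Gen → Prop
  | triv_mul_self (i : Γ.Edge) : Rel (Γ.freeTriv K i * Γ.freeTriv K i) (Γ.freeTriv K i)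
  | triv_mul_triv (i j : Γ.Edge) (h : i ≠ j) : Rel (Γ.freeTriv K i * Γ.freeTriv K j) 0
  | sum_triv : Rel (∑ᶠ i : Γ.Edge, Γ.freeTriv K i) 1
  | source_mul (a : Γ.Arrow) :
      Rel (Γ.freeTriv K (source a) * Γ.freeArr K a) (Γ.freeArr K a)
  | mul_target (a : Γ.Arrow) :
      Rel (Γ.freeArr K a * Γ.freeTriv K (Γ.target a)) (Γ.freeArr K a)
  | arr_mul_other (a : Γ.Arrow) : Rel (Γ.freeArr K a * Γ.freeArr K (Γ.next a).symm) 0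
  | cycle_eq (a : Γ.Arrow) : Rel (Γ.freeCycle K a) (Γ.freeCycle K a.symm)

/-- The basic Brauer tree algebra of `Γ` with multiplicity one. -/
abbrev Alg : Type (max u v) := RingQuot (Γ.Rel K)

/-- The idempotent `e_i` of the algebra. -/
noncomputable def idem (i : Γ.Edge) : Γ.Alg K := RingQuot.mkAlgHom K (Γ.Rel K) (Γ.freeTriv K i)

/-- The element of the algebra given by an arrow. -/
noncomputable def arrow (a : Γ.Arrow) : Γ.Alg K :=
  RingQuot.mkAlgHom K (Γ.Rel K) (Γ.freeArr K a)

/-- The indecomposable projective left module `A e_i`. -/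
noncomputable abbrev proj (i : Γ.Edge) : Submodule (Γ.Alg K) (Γ.Alg K) :=
  Submodule.span (Γ.Alg K) {Γ.idem K i}

/-- An ordered set of nonrepeating arrows such that the product of any two neighbors is nonzero
in the algebra. -/
def IsArrowChain (L : List Γ.Arrow) : Prop :=
  L.Nodup ∧ L.IsChain fun a b => Γ.arrow K a * Γ.arrow K b ≠ 0

/-- An `A`-cycle: a maximal ordered set of nonrepeating arrows such that the product of any two
neighbors is nonzero. -/
def IsACycle (L : List Γ.Arrow) : Prop :=
  Γ.IsArrowChain K L ∧ ∀ L' : List Γ.Arrow, Γ.IsArrowChain K L' → L.Sublist L' → L' = L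

/-- The vertex `i` of the quiver belongs to the `A`-cycle `L`. -/
def MemCycle (i : Γ.Edge) (L : List Γ.Arrow) : Prop :=
  ∃ a ∈ L, source a = i ∨ Γ.target a = i

/-- The arrows of the directed path of the quiver that starts at the vertex `i`, runs along one
cycle and stops when it first meets the vertex `j`. (For `i ≠ j` on a common cycle, this
cycle is unique because `Γ` is a tree.) -/
def pathArrows (i j : Γ.Edge) : Set Γ.Arrow :=
  {a | ∃ (b : Γ.Arrow) (m k : ℕ), source b = i ∧ source (Γ.next^[m] b) = j ∧
    (∀ l < m, source (Γ.next^[l] b) ≠ j) ∧ k < m ∧ a = Γ.next^[k] b}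

/-- Cochain complexes of left modules over the Brauer tree algebra. -/
abbrev Cplx : Type _ := CochainComplex (ModuleCat.{max u v} (Γ.Alg K)) ℤ

variable {Γ K}

/-- A complex of finitely generated projective modules concentrated in degrees `0` and `1`. -/
def IsTwoTermPerfect (T : Γ.Cplx K) : Prop :=
  (∀ n : ℤ, Module.Finite (Γ.Alg K) (T.X n) ∧ Module.Projective (Γ.Alg K) (T.X n)) ∧
  ∀ n : ℤ, n ≠ 0 → n ≠ 1 → Limits.IsZero (T.X n)

/-- `Hom(S, T[k]) = 0` in the derived category. The bounded derived category of finitely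
generated modules is a full subcategory of the derived category of all modules. -/
def HomVanishes [HasDerivedCategory.{w} (ModuleCat.{max u v} (Γ.Alg K))]
    (S T : Γ.Cplx K) (k : ℤ) : Prop :=
  ∀ f : DerivedCategory.Q.obj S ⟶ (shiftFunctor _ k).obj (DerivedCategory.Q.obj T), f = 0

/-- `T` is an indecomposable two-term partial tilting complex (in degrees `0` and `1`). -/
def IsIndecTwoTermPartialTilting [HasDerivedCategory.{w} (ModuleCat.{max u v} (Γ.Alg K))]
    (T : Γ.Cplx K) : Prop :=
  IsTwoTermPerfect T ∧ Indecomposable (DerivedCategory.Q.obj T) ∧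
    ∀ k : ℤ, k ≠ 0 → HomVanishes T T k

/-- A submodule `S` is superfluous if `N + S` is the whole module only if `N` is. -/
def IsSuperfluous {R : Type*} [Ring R] {M : Type*} [AddCommGroup M] [Module R M]
    (S : Submodule R M) : Prop :=
  ∀ N : Submodule R M, N ⊔ S = ⊤ → N = ⊤

/-- `T = (P_0 → P_1)` is a minimal projective presentation `P_0 → P_1 → M → 0`: the maps
`P_1 → M` and from `P_0` onto the kernel of `P_1 → M` are projective covers. -/
def IsMinimalPresentation (T : Γ.Cplx K) (M : ModuleCat.{max u v} (Γ.Alg K)) : Prop :=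
  IsTwoTermPerfect T ∧ ∃ π : T.X 1 ⟶ M,
    Function.Surjective π.hom ∧ LinearMap.range (T.d 0 1).hom = LinearMap.ker π.hom ∧
    IsSuperfluous (LinearMap.ker π.hom) ∧ IsSuperfluous (LinearMap.ker (T.d 0 1).hom)

/-- `T` is a minimal projective presentation of an indecomposable non-projective module. -/
def IsPresentation (T : Γ.Cplx K) : Prop :=
  ∃ M : ModuleCat.{max u v} (Γ.Alg K),
    Indecomposable M ∧ ¬ Module.Projective (Γ.Alg K) M ∧ IsMinimalPresentation T M

/-- A decomposition `P_0 = ⨁ A e_i`, `P_1 = ⨁ A e_j` of the terms of `T = (P_0 → P_1)`. -/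
structure Decomposition (T : Γ.Cplx K) where
  n₀ : ℕ
  n₁ : ℕ
  vert₀ : Fin n₀ → Γ.Edge
  vert₁ : Fin n₁ → Γ.Edge
  equiv₀ : T.X 0 ≃ₗ[Γ.Alg K] ((p : Fin n₀) → Γ.proj K (vert₀ p))
  equiv₁ : T.X 1 ≃ₗ[Γ.Alg K] ((q : Fin n₁) → Γ.proj K (vert₁ q))

namespace Decomposition

variable {T : Γ.Cplx K} (D : Decomposition T)

/-- The component of the differential between two summands of `P_0` and `P_1`. -/
noncomputable def component (p : Fin D.n₀) (q : Fin D.n₁) :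
    Γ.proj K (D.vert₀ p) →ₗ[Γ.Alg K] Γ.proj K (D.vert₁ q) :=
  LinearMap.proj q ∘ₗ D.equiv₁.toLinearMap ∘ₗ (T.d 0 1).hom ∘ₗ D.equiv₀.symm.toLinearMap ∘ₗ
    LinearMap.single (Γ.Alg K) (fun p => Γ.proj K (D.vert₀ p)) p

/-- The marked vertices of the diagram: the indices of the summands of `P_0` and of `P_1`. -/
def marked : Set Γ.Edge := Set.range D.vert₀ ∪ Set.range D.vert₁

/-- The arrows of the diagram: those on the paths from `i` to `j` for which the component of the
differential from `A e_i` to `A e_j` is nonzero. -/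
def diagramArrows : Set Γ.Arrow :=
  {a | ∃ p q, D.component p q ≠ 0 ∧ a ∈ Γ.pathArrows (D.vert₀ p) (D.vert₁ q)}

/-- The vertices of the diagram: the marked vertices and those on the marked paths. -/
def diagramVertices : Set Γ.Edge :=
  D.marked ∪ {i | ∃ a ∈ D.diagramArrows, source a = i ∨ Γ.target a = i}

end Decomposition

end BrauerTree

/-! A map `Tᵢ ⟶ Tⱼ[-1]` in the derived category is represented by a chain map, since `Tᵢ` is a
bounded above complex of projectives, and such a chain map has a single component, from `P₁` of
`Tᵢ` to `P₀` of `Tⱼ`. Its entries are maps `A e_x → A e_y`, that is, elements of `e_x A e_y`. The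
space `e_x A` is spanned by the paths from `x` that stay on one cycle of the quiver, and the
distinct arrows of a nonzero such path form a chain, which extends to an `A`-cycle through its end
points. Hence `e_x A e_y = 0` for `x` and `y` on no common `A`-cycle. -/

theorem linearMap_pi_eq_zero {R ι κ : Type*} [Semiring R] [Finite ι]
    {M : ι → Type*} [∀ i, AddCommMonoid (M i)] [∀ i, Module R (M i)]
    {N : κ → Type*} [∀ j, AddCommMonoid (N j)] [∀ j, Module R (N j)]
    (h : ∀ i j (φ : M i →ₗ[R] N j), φ = 0) (φ : (∀ i, M i) →ₗ[R] ∀ j, N j) : φ = 0 := by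
  classical
  refine LinearMap.pi_ext' fun i => LinearMap.ext fun z => funext fun j => ?_
  exact LinearMap.congr_fun (h i j (LinearMap.proj j ∘ₗ φ ∘ₗ LinearMap.single R M i)) z

theorem linearMap_span_idempotent_eq_zero {R : Type*} [Semiring R] {e e' : R}
    (he : IsIdempotentElem e) (h : ∀ r, e * r * e' = 0)
    (φ : Submodule.span R {e} →ₗ[R] Submodule.span R {e'}) : φ = 0 := by
  let g : Submodule.span R {e} := ⟨e, Submodule.mem_span_singleton_self e⟩
  have hg : e • g = g := Subtype.ext he
  obtain ⟨r, hr⟩ := Submodule.mem_span_singleton.1 (φ g).2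
  have hφg : φ g = 0 := Subtype.ext <| calc
    (φ g : R) = e * φ g := by
      rw [← smul_eq_mul, ← Submodule.coe_smul, ← map_smul, hg]
    _ = 0 := by rw [← hr, smul_eq_mul, ← mul_assoc, h]
  refine (Submodule.linearMap_eq_zero_iff_of_eq_span φ rfl).2 ?_
  rintro ⟨_, rfl⟩
  exact hφg

theorem cochainComplex_hom_shift_eq_zero {C : Type*} [Category* C] [Preadditive C]
    {S T : CochainComplex C ℤ} (a k : ℤ) [S.IsStrictlyLE a] [T.IsStrictlyGE (a + k)]
    (h : ∀ g : S.X a ⟶ T.X (a + k), g = 0) (g : S ⟶ T⟦k⟧) : g = 0 := by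
  ext1 n
  rcases lt_trichotomy n a with hn | rfl | hn
  · exact (T.isZero_of_isStrictlyGE (a + k) (n + k)).eq_of_tgt _ _
  · exact h (g.f n)
  · exact (S.isZero_of_isStrictlyLE a n).eq_of_src _ _

section DerivedCategory

variable {C : Type*} [Category* C] [Abelian C] [HasDerivedCategory.{w} C]
  {S T : CochainComplex C ℤ}

open DerivedCategory in
theorem derivedCategory_Q_map_surjective [S.IsKProjective] :
    Function.Surjective (Q.map : (S ⟶ T) → (Q.obj S ⟶ Q.obj T)) := by
  intro f
  obtain ⟨g, hg⟩ := (CochainComplex.IsKProjective.Qh_map_bijective S _).surjective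
    ((quotientCompQhIso C).hom.app S ≫ f ≫ (quotientCompQhIso C).inv.app T)
  obtain ⟨g, rfl⟩ := (HomotopyCategory.quotient _ _).map_surjective g
  refine ⟨g, ?_⟩
  rw [← cancel_epi ((quotientCompQhIso C).hom.app S), ← quotientCompQhIso_hom_naturality, hg]
  simp

theorem derivedCategory_hom_shift_eq_zero (a k : ℤ) [S.IsStrictlyLE a]
    [∀ n, Projective (S.X n)] [T.IsStrictlyGE (a + k)]
    (h : ∀ g : S.X a ⟶ T.X (a + k), g = 0)
    (f : DerivedCategory.Q.obj S ⟶ (DerivedCategory.Q.obj T)⟦k⟧) : f = 0 := by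
  have := CochainComplex.isKProjective_of_projective S a
  let e := (DerivedCategory.Q.commShiftIso k).app T
  obtain ⟨g, hg⟩ := derivedCategory_Q_map_surjective (f ≫ e.inv)
  rw [← cancel_mono e.inv, ← hg, cochainComplex_hom_shift_eq_zero a k h g, Functor.map_zero,
    Limits.zero_comp]

end DerivedCategory

namespace BrauerTree

variable {K : Type u} [Field K] {V : Type v} {Γ : BrauerTree V}

section ACycles

variable (Γ K) in
/-- The vertices `x` and `y` of the quiver lie on a common `A`-cycle. -/
def OnCommonCycle (x y : Γ.Edge) : Prop :=
  ∃ L, Γ.IsACycle K L ∧ Γ.MemCycle x L ∧ Γ.MemCycle y L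

theorem MemCycle.mono {L L' : List Γ.Arrow} {x : Γ.Edge} (hx : Γ.MemCycle x L) (h : L ⊆ L') :
    Γ.MemCycle x L' :=
  let ⟨a, ha, hax⟩ := hx
  ⟨a, h ha, hax⟩

variable [Finite V]

theorem IsArrowChain.exists_isACycle {L : List Γ.Arrow} (hL : Γ.IsArrowChain K L) :
    ∃ L', Γ.IsACycle K L' ∧ L.Sublist L' := by
  classical
  have := Fintype.ofFinite V
  have hfin : {L' | Γ.IsArrowChain K L' ∧ L.Sublist L'}.Finite :=
    (Set.finite_coe_iff.1 (Finite.of_fintype {L' : List Γ.Arrow // L'.Nodup})).subset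
      fun _ h => h.1.1
  obtain ⟨L', ⟨hL', hsub⟩, hmax⟩ :=
    hfin.exists_maximalFor List.length _ ⟨L, hL, List.Sublist.refl L⟩
  refine ⟨L', ⟨hL', fun L'' hL'' hsub' => ?_⟩, hsub⟩
  exact (hsub'.eq_of_length_le (hmax ⟨hL'', hsub.trans hsub'⟩ hsub'.length_le)).symm

theorem IsArrowChain.onCommonCycle {L : List Γ.Arrow} (hL : Γ.IsArrowChain K L)
    {x y : Γ.Edge} (hx : Γ.MemCycle x L) (hy : Γ.MemCycle y L) : Γ.OnCommonCycle K x y := by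
  obtain ⟨L', hL', hsub⟩ := hL.exists_isACycle
  exact ⟨L', hL', hx.mono hsub.subset, hy.mono hsub.subset⟩

end ACycles

section Quiver

theorem source_eq_source_iff {a b : Γ.Arrow} : source a = source b ↔ a = b ∨ a = b.symm := by
  rw [source, source, Subtype.mk.injEq, SimpleGraph.dart_edge_eq_iff]

theorem source_surjective : Function.Surjective (source : Γ.Arrow → Γ.Edge) := by
  rintro ⟨e, he⟩
  induction e with
  | _ u v => exact ⟨⟨(u, v), he⟩, rfl⟩

theorem target_iterate_next (a : Γ.Arrow) (k : ℕ) :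
    Γ.target (Γ.next^[k] a) = source (Γ.next^[k + 1] a) := by
  rw [target, Function.iterate_succ_apply']

end Quiver

section Relations

variable (K)

theorem isIdempotentElem_idem (i : Γ.Edge) : IsIdempotentElem (Γ.idem K i) := by
  simpa [idem, IsIdempotentElem] using RingQuot.mkAlgHom_rel K (Rel.triv_mul_self (K := K) i)

theorem idem_mul_idem_of_ne {i j : Γ.Edge} (h : i ≠ j) : Γ.idem K i * Γ.idem K j = 0 := by
  simpa [idem] using RingQuot.mkAlgHom_rel K (Rel.triv_mul_triv (K := K) i j h)

theorem idem_source_mul_arrow (a : Γ.Arrow) :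
    Γ.idem K (source a) * Γ.arrow K a = Γ.arrow K a := by
  simpa [idem, arrow] using RingQuot.mkAlgHom_rel K (Rel.source_mul (K := K) a)

theorem arrow_mul_idem_target (a : Γ.Arrow) :
    Γ.arrow K a * Γ.idem K (Γ.target a) = Γ.arrow K a := by
  simpa [idem, arrow] using RingQuot.mkAlgHom_rel K (Rel.mul_target (K := K) a)

theorem arrow_mul_arrow_next_symm (a : Γ.Arrow) :
    Γ.arrow K a * Γ.arrow K (Γ.next a).symm = 0 := by
  simpa [arrow] using RingQuot.mkAlgHom_rel K (Rel.arr_mul_other (K := K) a)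

variable (Γ) in
theorem adjoin_idem_arrow_eq_top :
    Algebra.adjoin K (Set.range (Γ.idem K) ∪ Set.range (Γ.arrow K)) = ⊤ := by
  have hgen : RingQuot.mkAlgHom K (Γ.Rel K) '' Set.range (FreeAlgebra.ι K) =
      Set.range (Γ.idem K) ∪ Set.range (Γ.arrow K) := by
    ext z
    constructor
    · rintro ⟨_, ⟨i | a, rfl⟩, rfl⟩
      exacts [Or.inl ⟨i, rfl⟩, Or.inr ⟨a, rfl⟩]
    · rintro (⟨i, rfl⟩ | ⟨a, rfl⟩)
      exacts [⟨_, ⟨Gen.triv i, rfl⟩, rfl⟩, ⟨_, ⟨Gen.arr a, rfl⟩, rfl⟩]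
  rw [← hgen, ← AlgHom.map_adjoin, FreeAlgebra.adjoin_range_ι, Algebra.map_top,
    (AlgHom.range_eq_top _).2 (RingQuot.mkAlgHom_surjective K _)]

end Relations

section Paths

variable (K) in
/-- The path of length `k` that starts with the arrow `a` and runs along the cycle of `a`, as an
element of the algebra. For `k = 0` it is the trivial path at the source of `a`. -/
noncomputable def cyclePath (a : Γ.Arrow) : ℕ → Γ.Alg K
  | 0 => Γ.idem K (source a)
  | k + 1 => cyclePath a k * Γ.arrow K (Γ.next^[k] a)

variable (Γ K) in
/-- The span of the paths that start at the vertex `x` and run along one cycle; it is `e_x A`. -/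
def cyclePathSpan (x : Γ.Edge) : Submodule K (Γ.Alg K) :=
  Submodule.span K {p | ∃ a k, source a = x ∧ cyclePath K a k = p}

theorem cyclePath_mem_cyclePathSpan (a : Γ.Arrow) (k : ℕ) :
    cyclePath K a k ∈ Γ.cyclePathSpan K (source a) :=
  Submodule.subset_span ⟨a, k, rfl, rfl⟩

theorem cyclePath_mul_idem_source (a : Γ.Arrow) (k : ℕ) :
    cyclePath K a k * Γ.idem K (source (Γ.next^[k] a)) = cyclePath K a k := by
  cases k with
  | zero => exact isIdempotentElem_idem K _
  | succ k => rw [cyclePath, mul_assoc, ← target_iterate_next, arrow_mul_idem_target]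

theorem cyclePath_mul_idem_of_ne {a : Γ.Arrow} {k : ℕ} {j : Γ.Edge}
    (h : source (Γ.next^[k] a) ≠ j) : cyclePath K a k * Γ.idem K j = 0 := by
  rw [← cyclePath_mul_idem_source, mul_assoc, idem_mul_idem_of_ne K h, mul_zero]

theorem cyclePath_mul_arrow_of_ne {a b : Γ.Arrow} {k : ℕ}
    (h : source (Γ.next^[k] a) ≠ source b) : cyclePath K a k * Γ.arrow K b = 0 := by
  rw [← idem_source_mul_arrow, ← mul_assoc, cyclePath_mul_idem_of_ne h, zero_mul]

theorem cyclePath_succ_mul_arrow_symm (a : Γ.Arrow) (k : ℕ) :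
    cyclePath K a (k + 1) * Γ.arrow K (Γ.next^[k + 1] a).symm = 0 := by
  rw [cyclePath, mul_assoc, Function.iterate_succ_apply', arrow_mul_arrow_next_symm, mul_zero]

theorem cyclePath_mul_idem_mem (a : Γ.Arrow) (k : ℕ) (j : Γ.Edge) :
    cyclePath K a k * Γ.idem K j ∈ Γ.cyclePathSpan K (source a) := by
  by_cases h : source (Γ.next^[k] a) = j
  · rw [← h, cyclePath_mul_idem_source]
    exact cyclePath_mem_cyclePathSpan a k
  · rw [cyclePath_mul_idem_of_ne h]
    exact zero_mem _

theorem cyclePath_mul_arrow_mem (a b : Γ.Arrow) (k : ℕ) :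
    cyclePath K a k * Γ.arrow K b ∈ Γ.cyclePathSpan K (source a) := by
  by_cases h : source b = source (Γ.next^[k] a)
  · rcases source_eq_source_iff.1 h with rfl | rfl
    · exact cyclePath_mem_cyclePathSpan a (k + 1)
    · cases k with
      | zero =>
        -- A path of length zero may continue along either cycle through its vertex.
        have hpath : cyclePath K a 0 * Γ.arrow K a.symm = cyclePath K a.symm 1 :=
          congrArg (Γ.idem K · * Γ.arrow K a.symm) h.symm
        exact Submodule.subset_span ⟨a.symm, 1, h, hpath.symm⟩
      | succ k =>
        rw [cyclePath_succ_mul_arrow_symm]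
        exact zero_mem _
  · rw [cyclePath_mul_arrow_of_ne (Ne.symm h)]
    exact zero_mem _

theorem mul_mem_cyclePathSpan {x : Γ.Edge} {z : Γ.Alg K} (hz : z ∈ Γ.cyclePathSpan K x)
    (r : Γ.Alg K) : z * r ∈ Γ.cyclePathSpan K x := by
  have hr : r ∈ Algebra.adjoin K (Set.range (Γ.idem K) ∪ Set.range (Γ.arrow K)) :=
    adjoin_idem_arrow_eq_top K Γ ▸ Algebra.mem_top
  induction hr using Algebra.adjoin_induction generalizing z with
  | mem g hg =>
    induction hz using Submodule.span_induction with
    | mem p hp =>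
      obtain ⟨a, k, rfl, rfl⟩ := hp
      rcases hg with ⟨j, rfl⟩ | ⟨b, rfl⟩
      · exact cyclePath_mul_idem_mem a k j
      · exact cyclePath_mul_arrow_mem a b k
    | zero => simp
    | add z z' _ _ hz hz' => rw [add_mul]; exact add_mem hz hz'
    | smul c z _ hz => rw [smul_mul_assoc]; exact Submodule.smul_mem _ c hz
  | algebraMap c =>
    rw [← Algebra.commutes, ← Algebra.smul_def]
    exact Submodule.smul_mem _ c hz
  | add r s _ _ hr hs => rw [mul_add]; exact add_mem (hr hz) (hs hz)
  | mul r s _ _ hr hs => rw [← mul_assoc]; exact hs (hr hz)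

theorem idem_mul_mem_cyclePathSpan (x : Γ.Edge) (r : Γ.Alg K) :
    Γ.idem K x * r ∈ Γ.cyclePathSpan K x := by
  obtain ⟨a, rfl⟩ := source_surjective x
  exact mul_mem_cyclePathSpan (cyclePath_mem_cyclePathSpan a 0) r

end Paths

section NonzeroPaths

theorem cyclePath_ne_zero_of_le {a : Γ.Arrow} {k m : ℕ} (hmk : m ≤ k)
    (h : cyclePath K a k ≠ 0) : cyclePath K a m ≠ 0 := by
  induction k, hmk using Nat.le_induction with
  | base => exact h
  | succ k _ ih => exact ih (left_ne_zero_of_mul h)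

theorem isArrowChain_of_cyclePath_ne_zero {a : Γ.Arrow} {k : ℕ} (h : cyclePath K a k ≠ 0)
    (hk : k ≤ Function.minimalPeriod Γ.next a) :
    Γ.IsArrowChain K ((List.range k).map fun l => Γ.next^[l] a) := by
  constructor
  · refine List.nodup_range.map_on fun p hp q hq hpq => ?_
    exact Function.iterate_injOn_Iio_minimalPeriod ((List.mem_range.1 hp).trans_le hk)
      ((List.mem_range.1 hq).trans_le hk) hpq
  · rw [List.isChain_map, List.isChain_range]
    intro l hl
    have hpath : cyclePath K a (l + 2) ≠ 0 := cyclePath_ne_zero_of_le (by omega) h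
    rw [cyclePath, cyclePath, mul_assoc] at hpath
    exact right_ne_zero_of_mul hpath

variable [Finite V]

theorem onCommonCycle_of_cyclePath_ne_zero_of_le {a : Γ.Arrow} {k : ℕ}
    (h : cyclePath K a k ≠ 0) (hk : k ≤ Function.minimalPeriod Γ.next a) :
    Γ.OnCommonCycle K (source a) (source (Γ.next^[k] a)) := by
  cases k with
  | zero =>
    have hchain : Γ.IsArrowChain K [a] := ⟨List.nodup_singleton a, List.isChain_singleton a⟩
    have ha : Γ.MemCycle (source a) [a] := ⟨a, List.mem_singleton_self a, Or.inl rfl⟩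
    exact hchain.onCommonCycle ha ha
  | succ k =>
    have hmem : ∀ l ≤ k, Γ.next^[l] a ∈ (List.range (k + 1)).map fun l => Γ.next^[l] a :=
      fun l hl => List.mem_map_of_mem (List.mem_range.2 (Nat.lt_succ_of_le hl))
    exact (isArrowChain_of_cyclePath_ne_zero h hk).onCommonCycle
      ⟨a, hmem 0 k.zero_le, Or.inl rfl⟩ ⟨_, hmem k le_rfl, Or.inr (target_iterate_next a k)⟩

theorem onCommonCycle_of_cyclePath_ne_zero {a : Γ.Arrow} {k : ℕ} (h : cyclePath K a k ≠ 0) :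
    Γ.OnCommonCycle K (source a) (source (Γ.next^[k] a)) := by
  classical
  have := Fintype.ofFinite V
  have hperiod : 0 < Function.minimalPeriod Γ.next a :=
    Function.minimalPeriod_pos_of_mem_periodicPts (Γ.next.injective.mem_periodicPts a)
  rw [← Function.iterate_mod_minimalPeriod_eq]
  exact onCommonCycle_of_cyclePath_ne_zero_of_le (cyclePath_ne_zero_of_le (Nat.mod_le k _) h)
    (Nat.mod_lt k hperiod).le

theorem cyclePath_mul_idem_eq_zero {a : Γ.Arrow} {y : Γ.Edge}
    (h : ¬ Γ.OnCommonCycle K (source a) y) (k : ℕ) : cyclePath K a k * Γ.idem K y = 0 := by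
  by_cases hy : source (Γ.next^[k] a) = y
  · subst hy
    rw [cyclePath_mul_idem_source]
    exact not_not.1 (mt onCommonCycle_of_cyclePath_ne_zero h)
  · exact cyclePath_mul_idem_of_ne hy

theorem idem_mul_mul_idem_eq_zero {x y : Γ.Edge} (h : ¬ Γ.OnCommonCycle K x y) (r : Γ.Alg K) :
    Γ.idem K x * r * Γ.idem K y = 0 := by
  have hmem := idem_mul_mem_cyclePathSpan x r
  generalize Γ.idem K x * r = z at hmem ⊢
  induction hmem using Submodule.span_induction with
  | mem p hp =>
    obtain ⟨a, k, rfl, rfl⟩ := hp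
    exact cyclePath_mul_idem_eq_zero h k
  | zero => exact zero_mul _
  | add z z' _ _ hz hz' => rw [add_mul, hz, hz', add_zero]
  | smul c z _ hz => rw [smul_mul_assoc, hz, smul_zero]

theorem proj_hom_eq_zero {x y : Γ.Edge} (h : ¬ Γ.OnCommonCycle K x y)
    (φ : Γ.proj K x →ₗ[Γ.Alg K] Γ.proj K y) : φ = 0 :=
  linearMap_span_idempotent_eq_zero (isIdempotentElem_idem K x) (idem_mul_mul_idem_eq_zero h) φ

end NonzeroPaths

section Complexes

variable {S T : Γ.Cplx K}

theorem IsTwoTermPerfect.isStrictlyLE (hT : IsTwoTermPerfect T) : T.IsStrictlyLE 1 := by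
  rw [CochainComplex.isStrictlyLE_iff]
  exact fun n hn => hT.2 n (by omega) (by omega)

theorem IsTwoTermPerfect.isStrictlyGE (hT : IsTwoTermPerfect T) : T.IsStrictlyGE 0 := by
  rw [CochainComplex.isStrictlyGE_iff]
  exact fun n hn => hT.2 n (by omega) (by omega)

theorem IsTwoTermPerfect.projective (hT : IsTwoTermPerfect T) (n : ℤ) : Projective (T.X n) :=
  (IsProjective.iff_projective (T.X n)).1 (hT.1 n).2

theorem IsTwoTermPerfect.homVanishes_neg_one
    [HasDerivedCategory.{w} (ModuleCat.{max u v} (Γ.Alg K))]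
    (hS : IsTwoTermPerfect S) (hT : IsTwoTermPerfect T) (h : ∀ g : S.X 1 ⟶ T.X 0, g = 0) :
    HomVanishes S T (-1) := by
  have := hS.isStrictlyLE
  have := hS.projective
  have : T.IsStrictlyGE (1 + -1) := hT.isStrictlyGE
  exact derivedCategory_hom_shift_eq_zero 1 (-1) h

theorem Decomposition.hom_eq_zero (D : Decomposition S) (E : Decomposition T)
    (h : ∀ q p (φ : Γ.proj K (D.vert₁ q) →ₗ[Γ.Alg K] Γ.proj K (E.vert₀ p)), φ = 0)
    (g : S.X 1 ⟶ T.X 0) : g = 0 := by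
  have hg : E.equiv₀.toLinearMap ∘ₗ g.hom ∘ₗ D.equiv₁.symm.toLinearMap = 0 :=
    linearMap_pi_eq_zero h _
  ext z
  simpa using LinearMap.congr_fun hg (D.equiv₁ z)

end Complexes

end BrauerTree

theorem hom_vanishes_of_no_common_cycle_general {K : Type u} [Field K] {V : Type v} [Finite V]
    (Γ : BrauerTree V) [HasDerivedCategory.{w} (ModuleCat.{max u v} (Γ.Alg K))]
    (S T : Γ.Cplx K) (hS : BrauerTree.IsTwoTermPerfect S) (hT : BrauerTree.IsTwoTermPerfect T)
    (D : BrauerTree.Decomposition S) (E : BrauerTree.Decomposition T)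
    (h : ∀ q p, ¬ Γ.OnCommonCycle K (D.vert₁ q) (E.vert₀ p)) :
    BrauerTree.HomVanishes S T (-1) :=
  hS.homVanishes_neg_one hT <| D.hom_eq_zero E fun q p => BrauerTree.proj_hom_eq_zero (h q p)

theorem hom_vanishes_of_no_common_cycle {K : Type u} [Field K] [IsAlgClosed K]
    {V : Type v} [Finite V] (Γ : BrauerTree V)
    [HasDerivedCategory.{w} (ModuleCat.{max u v} (Γ.Alg K))]
    (Ti Tj : Γ.Cplx K)
    (hTi : BrauerTree.IsIndecTwoTermPartialTilting Ti)
    (hTj : BrauerTree.IsIndecTwoTermPartialTilting Tj)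
    (hpi : BrauerTree.IsPresentation Ti) (hpj : BrauerTree.IsPresentation Tj)
    (Di : BrauerTree.Decomposition Ti) (Dj : BrauerTree.Decomposition Tj)
    (h : ¬ ∃ L : List Γ.Arrow, Γ.IsACycle K L ∧
      (∃ x ∈ Di.diagramVertices, Γ.MemCycle x L) ∧
      ∃ y ∈ Dj.diagramVertices, Γ.MemCycle y L) :
    BrauerTree.HomVanishes Ti Tj (-1) :=
  hom_vanishes_of_no_common_cycle_general Γ Ti Tj hTi.1 hTj.1 Di Dj fun q p ⟨L, hL, hq, hp⟩ =>
    h ⟨L, hL, ⟨_, Or.inl (Or.inr ⟨q, rfl⟩), hq⟩, _, Or.inl (Or.inl ⟨p, rfl⟩), hp⟩
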